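/- Let k > d ≥ 0 be integers and let G be a finite simple graph on n vertices that is k-degenerate. Then α_d(G) ≥ max{ (d+1)·n/(k+d+1), n − α_{k−d−1}(G) }. Furthermore, the vertex set of G can be partitioned into sets X and Y such that the subgraph of G induced on X is d-degenerate and the subgraph of G induced on Y is (k−d−1)-degenerate. -/

import Mathlib

/-!
Build the graph by adding its vertices one at a time, each with at most `k` earlier neighbours, in
the reverse of the order in which `k`-degeneracy removes them. A set of earlier vertices stays
`d`-degenerate after adding `v` as soon as it contains at most `d` neighbours of `v`.

For the partition, if `k = d + e + 1` then `v` has at most `d` neighbours in the first part or at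
most `e` in the second, so it can join one of them.

For the fractional bound, grow `k + d + 1` `d`-degenerate sets, adding each vertex to exactly
`d + 1` of them. As the at most `k` earlier neighbours of `v` each lie in `d + 1` sets, at most `k`
sets contain more than `d` of them, which leaves `d + 1` sets for `v`. Some set then has at least
the average size.
-/

/-- The subgraph of `G` induced on `A` is `d`-degenerate: every nonempty (finite)
subset of `A` contains a vertex with at most `d` neighbours inside that subset. -/
def DegenOn {V : Type*} (G : SimpleGraph V) (d : ℕ) (A : Set V) : Prop :=
  ∀ S : Set V, S ⊆ A → S.Finite → S.Nonempty → ∃ v ∈ S, (S ∩ G.neighborSet v).ncard ≤ d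

/-- `G` is `d`-degenerate. -/
def Degen {V : Type*} (G : SimpleGraph V) (d : ℕ) : Prop :=
  DegenOn G d Set.univ

/-- `α_d(G)`: the maximum number of vertices of an induced `d`-degenerate subgraph of `G`. -/
noncomputable def alphaDeg {V : Type*} [Fintype V] (G : SimpleGraph V) (d : ℕ) : ℕ :=
  sSup {m : ℕ | ∃ A : Set V, DegenOn G d A ∧ A.ncard = m}

open Finset

section Pigeonhole

variable {α ι : Type*} [Fintype ι] [DecidableEq α] {C : ι → Finset α} {N : Finset α} {m : ℕ}

theorem card_filter_le_card_inter_le (hm : 0 < m) (hC : ∀ u ∈ N, #{i | u ∈ C i} ≤ m) :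
    #{i | m ≤ #(N ∩ C i)} ≤ #N := by
  refine Nat.le_of_mul_le_mul_right
    (card_mul_le_card_mul (fun i u => u ∈ C i) (fun i hi => ?_) fun u hu => ?_) hm
  · simpa only [bipartiteAbove, filter_mem_eq_inter] using (mem_filter.1 hi).2
  · exact (card_le_card (filter_subset_filter _ (subset_univ _))).trans (hC u hu)

theorem exists_card_eq_forall_card_inter_lt {t : ℕ} (hm : 0 < m)
    (hC : ∀ u ∈ N, #{i | u ∈ C i} ≤ m) (ht : #N + t ≤ Fintype.card ι) :
    ∃ T : Finset ι, #T = t ∧ ∀ i ∈ T, #(N ∩ C i) < m := by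
  have hrich : #{i | m ≤ #(N ∩ C i)} ≤ #N := card_filter_le_card_inter_le hm hC
  have hsplit := card_filter_add_card_filter_not (s := univ) fun i => m ≤ #(N ∩ C i)
  rw [card_univ] at hsplit
  obtain ⟨T, hT, hTcard⟩ := exists_subset_card_eq
    (show t ≤ #{i | ¬ m ≤ #(N ∩ C i)} by lia)
  exact ⟨T, hTcard, fun i hi => not_le.1 (mem_filter.1 (hT hi)).2⟩

end Pigeonhole

section Degeneracy

variable {V : Type*} {G : SimpleGraph V} {k d e : ℕ}

theorem degenOn_iff_forall_finset [DecidableRel G.Adj] {A : Set V} :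
    DegenOn G d A ↔
      ∀ S : Finset V, (S : Set V) ⊆ A → S.Nonempty → ∃ v ∈ S, #{w ∈ S | G.Adj v w} ≤ d := by
  have ncard_eq (S : Finset V) (v : V) :
      ((S : Set V) ∩ G.neighborSet v).ncard = #{w ∈ S | G.Adj v w} := by
    rw [← Set.ncard_coe_finset, coe_filter]
    rfl
  constructor
  · intro hA S hSA hS
    simpa only [ncard_eq, mem_coe] using hA S hSA S.finite_toSet hS
  · intro hA S hSA hfin hS
    lift S to Finset V using hfin
    simpa only [ncard_eq, mem_coe] using hA S hSA hS

theorem degenOn_empty : DegenOn G d ∅ :=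
  fun _ hS _ hne => absurd (hne.mono hS) Set.not_nonempty_empty

theorem DegenOn.mono {A B : Set V} (hB : DegenOn G d B) (hAB : A ⊆ B) : DegenOn G d A :=
  fun S hS => hB S (hS.trans hAB)

protected theorem DegenOn.insert [DecidableEq V] [DecidableRel G.Adj] {B : Finset V} {v : V}
    (hB : DegenOn G d B) (hv : #{w ∈ B | G.Adj v w} ≤ d) :
    DegenOn G d (insert v B : Finset V) := by
  rw [degenOn_iff_forall_finset] at hB ⊢
  intro S hS hne
  rw [coe_subset] at hS
  by_cases hvS : v ∈ S
  · refine ⟨v, hvS, (card_le_card fun w hw => ?_).trans hv⟩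
    obtain ⟨hwS, hvw⟩ := mem_filter.1 hw
    exact mem_filter.2 ⟨mem_of_mem_insert_of_ne (hS hwS) hvw.ne', hvw⟩
  · exact hB S (coe_subset.2 ((subset_insert_iff_of_notMem hvS).1 hS)) hne

@[elab_as_elim]
theorem DegenOn.induction_on [DecidableEq V] [DecidableRel G.Adj]
    {motive : ∀ A : Finset V, DegenOn G k A → Prop} (A : Finset V) (hA : DegenOn G k A)
    (empty : motive ∅ (by simpa using degenOn_empty))
    (insert : ∀ v B (_ : v ∉ B) (hdeg : #{w ∈ B | G.Adj v w} ≤ k) (hB : DegenOn G k B),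
      motive B hB → motive (insert v B) (hB.insert hdeg)) :
    motive A hA := by
  induction A using Finset.strongInduction with
  | H A ih =>
    obtain rfl | hne := A.eq_empty_or_nonempty
    · exact empty
    obtain ⟨v, hvA, hdeg⟩ := degenOn_iff_forall_finset.1 hA A subset_rfl hne
    have hsub : A.erase v ⊆ A := erase_subset v A
    have hinsert := insert v (A.erase v) (notMem_erase v A)
      ((card_le_card (filter_subset_filter _ hsub)).trans hdeg)
      (hA.mono (coe_subset.2 hsub)) (ih _ (erase_ssubset hvA) _)
    simpa only [insert_erase hvA] using hinsert

theorem DegenOn.exists_partition [DecidableEq V] {A : Finset V} (hA : DegenOn G (d + e + 1) A) :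
    ∃ X Y : Finset V, X ∪ Y = A ∧ Disjoint X Y ∧ DegenOn G d X ∧ DegenOn G e Y := by
  classical
  induction A, hA using DegenOn.induction_on with
  | empty =>
    exact ⟨∅, ∅, empty_union ∅, disjoint_empty_left ∅, by simpa using degenOn_empty,
      by simpa using degenOn_empty⟩
  | insert v B hvB hdeg _ ih =>
    obtain ⟨X, Y, rfl, hXY, hX, hY⟩ := ih
    rw [notMem_union] at hvB
    rw [filter_union, card_union_of_disjoint (disjoint_filter_filter hXY)] at hdeg
    obtain hvX | hvY : #{w ∈ X | G.Adj v w} ≤ d ∨ #{w ∈ Y | G.Adj v w} ≤ e := by lia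
    · exact ⟨insert v X, Y, insert_union v X Y, disjoint_insert_left.2 ⟨hvB.2, hXY⟩,
        hX.insert hvX, hY⟩
    · exact ⟨X, insert v Y, union_insert v X Y, disjoint_insert_right.2 ⟨hvB.1, hXY⟩,
        hX, hY.insert hvY⟩

theorem Degen.exists_partition [Finite V] (hG : Degen G (d + e + 1)) :
    ∃ X Y : Set V, X ∪ Y = Set.univ ∧ Disjoint X Y ∧ DegenOn G d X ∧ DegenOn G e Y := by
  classical
  cases nonempty_fintype V
  rw [Degen, ← coe_univ] at hG
  obtain ⟨X, Y, hunion, hdisj, hX, hY⟩ := hG.exists_partition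
  exact ⟨X, Y, by rw [← coe_union, hunion, coe_univ], disjoint_coe.2 hdisj, hX, hY⟩

theorem DegenOn.exists_cover [DecidableEq V] {ι : Type*} [Fintype ι] {A : Finset V}
    (hA : DegenOn G k A) (hι : k + d < Fintype.card ι) :
    ∃ C : ι → Finset V, (∀ i, C i ⊆ A) ∧ (∀ i, DegenOn G d (C i)) ∧
      ∀ v ∈ A, #{i | v ∈ C i} = d + 1 := by
  classical
  induction A, hA using DegenOn.induction_on with
  | empty => exact ⟨fun _ => ∅, by simp, by simp [degenOn_empty], by simp⟩
  | insert v B hvB hdeg _ ih =>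
    obtain ⟨C, hCB, hC, hcount⟩ := ih
    obtain ⟨T, hTcard, hT⟩ := exists_card_eq_forall_card_inter_lt (N := {w ∈ B | G.Adj v w})
      (t := d + 1) d.succ_pos (fun u hu => (hcount u (mem_filter.1 hu).1).le) (by lia)
    have hvC (i : ι) : v ∉ C i := fun h => hvB (hCB i h)
    have hdegC (i : ι) (hi : i ∈ T) : #{w ∈ C i | G.Adj v w} ≤ d := by
      rw [← inter_eq_right.2 (hCB i), ← filter_inter]
      exact Nat.le_of_lt_succ (hT i hi)
    let C' (i : ι) : Finset V := if i ∈ T then insert v (C i) else C i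
    have mem_C' (u : V) (i : ι) : u ∈ C' i ↔ u ∈ C i ∨ u = v ∧ i ∈ T := by
      by_cases hi : i ∈ T <;> simp [C', hi, or_comm]
    refine ⟨C', fun i u hu => ?_, fun i => ?_, fun u hu => ?_⟩
    · obtain huC | ⟨rfl, -⟩ := (mem_C' u i).1 hu
      · exact mem_insert_of_mem (hCB i huC)
      · exact mem_insert_self u B
    · by_cases hi : i ∈ T
      · simpa only [C', if_pos hi] using (hC i).insert (hdegC i hi)
      · simpa only [C', if_neg hi] using hC i
    · obtain rfl | huB := mem_insert.1 hu
      · simpa [mem_C', hvC] using hTcard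
      · simpa [mem_C', ne_of_mem_of_not_mem huB hvB] using hcount u huB

end Degeneracy

section Alpha

variable {V : Type*} [Fintype V] {G : SimpleGraph V} {k d e : ℕ}

theorem DegenOn.ncard_le_alphaDeg {A : Set V} (hA : DegenOn G d A) : A.ncard ≤ alphaDeg G d := by
  refine le_csSup ⟨Nat.card V, ?_⟩ ⟨A, hA, rfl⟩
  rintro _ ⟨B, -, rfl⟩
  exact Set.ncard_le_card B

theorem Degen.card_le_alphaDeg_add_alphaDeg (hG : Degen G (d + e + 1)) :
    Fintype.card V ≤ alphaDeg G d + alphaDeg G e := by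
  obtain ⟨X, Y, hunion, -, hX, hY⟩ := hG.exists_partition
  calc Fintype.card V = (X ∪ Y).ncard := by
        rw [hunion, Set.ncard_univ, Nat.card_eq_fintype_card]
    _ ≤ X.ncard + Y.ncard := Set.ncard_union_le X Y
    _ ≤ alphaDeg G d + alphaDeg G e := add_le_add hX.ncard_le_alphaDeg hY.ncard_le_alphaDeg

theorem Degen.card_mul_le_mul_alphaDeg (hG : Degen G k) (d : ℕ) :
    Fintype.card V * (d + 1) ≤ (k + d + 1) * alphaDeg G d := by
  classical
  rw [Degen, ← coe_univ] at hG
  obtain ⟨C, -, hC, hcount⟩ := hG.exists_cover (d := d) (ι := Fin (k + d + 1)) (by simp)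
  have hcard (i) : #(C i) ≤ alphaDeg G d := by
    simpa only [Set.ncard_coe_finset] using (hC i).ncard_le_alphaDeg
  simpa only [card_univ, Fintype.card_fin] using
    card_mul_le_card_mul (s := univ) (t := univ) (fun v i => v ∈ C i)
      (fun v hv => (hcount v hv).ge) fun i _ => by
        simpa only [bipartiteBelow, filter_univ_mem] using hcard i

end Alpha

theorem stmt_0 {V : Type*} [Fintype V] (G : SimpleGraph V) (k d : ℕ) (hdk : d < k)
    (hG : Degen G k) :
    (((d : ℚ) + 1) * (Fintype.card V : ℚ) / ((k : ℚ) + (d : ℚ) + 1) ≤ (alphaDeg G d : ℚ) ∧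
      (Fintype.card V : ℚ) - (alphaDeg G (k - d - 1) : ℚ) ≤ (alphaDeg G d : ℚ)) ∧
    ∃ X Y : Set V, X ∪ Y = Set.univ ∧ Disjoint X Y ∧
      DegenOn G d X ∧ DegenOn G (k - d - 1) Y := by
  obtain ⟨e, rfl⟩ := Nat.exists_eq_add_of_lt hdk
  have hsub : d + e + 1 - d - 1 = e := by lia
  rw [hsub]
  refine ⟨⟨?_, ?_⟩, hG.exists_partition⟩
  · rw [div_le_iff₀' (by positivity), mul_comm]
    exact_mod_cast hG.card_mul_le_mul_alphaDeg d
  · rw [sub_le_iff_le_add]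
    exact_mod_cast hG.card_le_alphaDeg_add_alphaDeg
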